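/- Let n ≥ 2 and let ψ be an outmap that is a USO of the full face [∅,{1,…,n−1}] of the standard (n−1)-cube. For i ∈ {0,1} define the outmap φ_i on the standard n-cube by: for V ⊆ {1,…,n−1}, φ_i(V) = ψ(V) if |ψ(V)| ≡ i (mod 2) and φ_i(V) = ψ(V) ∪ {n} otherwise; and for V with n ∈ V, φ_i(V) = φ_i({1,…,n} \ V). Then the following are equivalent: (a) ψ is a border USO; (b) φ_0 is a PUSO of the full face [∅,{1,…,n}]; (c) φ_1 is a PUSO of the full face [∅,{1,…,n}]. -/

import Mathlib

/-!
Flipping one coordinate `i` in all outmap values preserves the PUSO property: if both `i`-facets of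
a face have a unique sink, then a sink of the whole face is one of these two vertices, selected by
whether `i` lies in its outmap value, and flipping exchanges the selected and the unselected ones
(`hasUniqueSink_flip`). Hence flipping an arbitrary coordinate set preserves PUSOs
(`IsPUSO.flip`), and any statement about sinks of a PUSO `φ` of `[∅, N]` becomes one about
arbitrary outmap values.

A PUSO with a sink `V` has a second sink, which cannot share a facet with `V`, so it is antipodal
to `V`; after flipping, antipodal vertices always have the same outmap value
(`IsPUSO.antipodal`). If `V` and `N \ V` are sinks, no vertex can have outmap value `{i}`, since it
would be a second sink of an `i`-facet, while each `i`-facet does have a sink. After flipping: of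
two values differing in one coordinate exactly one is attained (`IsPUSO.attained_symmDiff`), so all
attained values have the same parity (`IsPUSO.parity`).

Therefore a PUSO extending `ψ` is determined on the cube by `ψ` and the common parity `p`: it
is `φ_p`. The other candidate arises from `φ_p` by flipping coordinate `n`, so it is a PUSO too.
-/


open Finset
open scoped symmDiff

/-- `V` is a sink of the face `[A,B]` of the standard cube (vertices are subsets
of `{1,…,n}`) under the outmap `φ`: `V` belongs to the face and `φ V` has no
coordinate in the carrier `B \ A`. -/
def IsSink (φ : Finset ℕ → Finset ℕ) (A B V : Finset ℕ) : Prop :=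
  A ⊆ V ∧ V ⊆ B ∧ φ V ∩ (B \ A) = ∅

/-- The face `[A,B]` has exactly one sink under `φ`. -/
def HasUniqueSink (φ : Finset ℕ → Finset ℕ) (A B : Finset ℕ) : Prop :=
  ∃! V, IsSink φ A B V

/-- `φ` is a USO of the face `[A,B]`: every face contained in `[A,B]`
(including `[A,B]` itself) has exactly one sink under `φ`. -/
def IsUSO (φ : Finset ℕ → Finset ℕ) (A B : Finset ℕ) : Prop :=
  A ⊆ B ∧ ∀ A' B' : Finset ℕ, A ⊆ A' → A' ⊆ B' → B' ⊆ B → HasUniqueSink φ A' B'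

/-- `φ` is a PUSO of the face `[A,B]`: `[A,B]` does not have exactly one sink
under `φ`, but every proper face contained in `[A,B]` has exactly one sink. -/
def IsPUSO (φ : Finset ℕ → Finset ℕ) (A B : Finset ℕ) : Prop :=
  A ⊆ B ∧ ¬ HasUniqueSink φ A B ∧
    ∀ A' B' : Finset ℕ, A ⊆ A' → A' ⊆ B' → B' ⊆ B → ¬(A' = A ∧ B' = B) →
      HasUniqueSink φ A' B'

/-- `ψ` is a border USO of the full face of the standard `n`-cube: it is a USO
and there is an outmap `φ` on the standard `(n+1)`-cube that is a PUSO of the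
full face and whose restriction to the facet `[∅, {1,…,n}]` agrees with `ψ`. -/
def IsBorderUSO (n : ℕ) (ψ : Finset ℕ → Finset ℕ) : Prop :=
  IsUSO ψ ∅ (Finset.Icc 1 n) ∧
    ∃ φ : Finset ℕ → Finset ℕ, IsPUSO φ ∅ (Finset.Icc 1 (n + 1)) ∧
      ∀ V : Finset ℕ, V ⊆ Finset.Icc 1 n → φ V ∩ Finset.Icc 1 n = ψ V

/-- Auxiliary map for extending an outmap `ψ` of the `(n-1)`-cube to the
`n`-cube: keep `ψ V` if `|ψ V|` has parity `i`, otherwise add coordinate `n`. -/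
def phiExtAux (n i : ℕ) (ψ : Finset ℕ → Finset ℕ) (V : Finset ℕ) : Finset ℕ :=
  if (ψ V).card % 2 = i % 2 then ψ V else ψ V ∪ {n}

/-- The two candidate extensions `φ_i` (i = 0, 1) of a USO `ψ` of the facet
`[∅,{1,…,n-1}]` to the standard `n`-cube: on the facet use `phiExtAux`, and for
vertices containing `n` copy the value of the antipodal vertex. -/
def phiExt (n i : ℕ) (ψ : Finset ℕ → Finset ℕ) (V : Finset ℕ) : Finset ℕ :=
  if n ∈ V then phiExtAux n i ψ (Finset.Icc 1 n \ V) else phiExtAux n i ψ V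

/-- The outmap `φ` with all coordinates in `U` reversed. -/
def flipOut (φ : Finset ℕ → Finset ℕ) (U : Finset ℕ) : Finset ℕ → Finset ℕ :=
  fun V => φ V ∆ U

lemma isSink_iff (φ : Finset ℕ → Finset ℕ) (A B V : Finset ℕ) :
    IsSink φ A B V ↔ A ⊆ V ∧ V ⊆ B ∧ ∀ x ∈ B, x ∉ A → x ∉ φ V := by
  unfold IsSink
  simp only [Finset.eq_empty_iff_forall_notMem, Finset.mem_inter, Finset.mem_sdiff]
  grind

/-- A sink of a face is a sink of one of its two `i`-facets whose `i`-edge is incoming. -/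
lemma isSink_split (φ : Finset ℕ → Finset ℕ) {A B : Finset ℕ} {i : ℕ} (hB : i ∈ B)
    (hA : i ∉ A) (V : Finset ℕ) :
    IsSink φ A B V ↔
      (IsSink φ A (B.erase i) V ∨ IsSink φ (insert i A) B V) ∧ i ∉ φ V := by
  simp only [isSink_iff]
  constructor
  · rintro ⟨h1, h2, h3⟩
    refine ⟨?_, h3 i hB hA⟩
    by_cases hi : i ∈ V
    · right; grind
    · left; grind
  · rintro ⟨h | h, hi⟩ <;> grind

/-- Flipping a coordinate outside the carrier does not change sinks. -/
lemma isSink_flip_of_notMem (φ : Finset ℕ → Finset ℕ) {A B : Finset ℕ} {i : ℕ}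
    (h : i ∉ B \ A) (V : Finset ℕ) : IsSink (flipOut φ {i}) A B V ↔ IsSink φ A B V := by
  simp only [isSink_iff, flipOut, Finset.mem_symmDiff, Finset.mem_singleton]
  grind

/-- The two `i`-facets have unique sinks `s₀`, `s₁`; the face has a unique sink iff exactly one of
`φ s₀`, `φ s₁` contains `i`, a condition that is invariant under flipping `i`. -/
lemma hasUniqueSink_flip (φ : Finset ℕ → Finset ℕ) {A B : Finset ℕ} {i : ℕ} (hB : i ∈ B)
    (hA : i ∉ A) (h0 : HasUniqueSink φ A (B.erase i)) (h1 : HasUniqueSink φ (insert i A) B) :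
    HasUniqueSink (flipOut φ {i}) A B ↔ HasUniqueSink φ A B := by
  obtain ⟨s0, hs0, hu0⟩ := h0
  obtain ⟨s1, hs1, hu1⟩ := h1
  have hne : s0 ≠ s1 := by
    rintro rfl
    exact (Finset.mem_erase.1 (hs0.2.1 (hs1.1 (Finset.mem_insert_self i A)))).1 rfl
  have e0 : ∀ V, IsSink φ A (B.erase i) V ↔ V = s0 := fun V => ⟨hu0 V, fun h => h ▸ hs0⟩
  have e1 : ∀ V, IsSink φ (insert i A) B V ↔ V = s1 := fun V => ⟨hu1 V, fun h => h ▸ hs1⟩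
  have e : ∀ V, IsSink φ A B V ↔ (V = s0 ∨ V = s1) ∧ i ∉ φ V := fun V => by
    rw [isSink_split φ hB hA, e0, e1]
  have f : ∀ V, IsSink (flipOut φ {i}) A B V ↔ (V = s0 ∨ V = s1) ∧ i ∈ φ V := fun V => by
    rw [isSink_split _ hB hA, isSink_flip_of_notMem φ (by simp),
      isSink_flip_of_notMem φ (by simp), e0, e1]
    simp [flipOut, Finset.mem_symmDiff]
  unfold HasUniqueSink ExistsUnique
  simp only [e, f]
  by_cases a : i ∈ φ s0 <;> by_cases b : i ∈ φ s1
  · constructor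
    · rintro ⟨V, -, hV⟩
      exact absurd ((hV s0 ⟨.inl rfl, a⟩).trans (hV s1 ⟨.inr rfl, b⟩).symm) hne
    · grind
  · exact ⟨fun _ => ⟨s1, by grind⟩, fun _ => ⟨s0, by grind⟩⟩
  · exact ⟨fun _ => ⟨s0, by grind⟩, fun _ => ⟨s1, by grind⟩⟩
  · constructor
    · grind
    · rintro ⟨V, -, hV⟩
      exact absurd ((hV s0 ⟨.inl rfl, a⟩).trans (hV s1 ⟨.inr rfl, b⟩).symm) hne

lemma IsPUSO.flip_singleton {φ : Finset ℕ → Finset ℕ} {A B : Finset ℕ} (h : IsPUSO φ A B)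
    (i : ℕ) : IsPUSO (flipOut φ {i}) A B := by
  obtain ⟨hAB, hn, hp⟩ := h
  have key : ∀ A' B' : Finset ℕ, A ⊆ A' → A' ⊆ B' → B' ⊆ B →
      (HasUniqueSink (flipOut φ {i}) A' B' ↔ HasUniqueSink φ A' B') := by
    intro A' B' h1 h2 h3
    by_cases hi : i ∈ B' \ A'
    · obtain ⟨hB, hA⟩ := Finset.mem_sdiff.1 hi
      refine hasUniqueSink_flip φ hB hA (hp _ _ h1 ?_ ?_ ?_) (hp _ _ ?_ ?_ h3 ?_) <;> grind
    · simp only [HasUniqueSink, isSink_flip_of_notMem φ hi]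
  refine ⟨hAB, fun h => hn ((key A B subset_rfl hAB subset_rfl).1 h), ?_⟩
  intro A' B' h1 h2 h3 h4
  exact (key A' B' h1 h2 h3).2 (hp A' B' h1 h2 h3 h4)

lemma IsPUSO.flip {φ : Finset ℕ → Finset ℕ} {A B : Finset ℕ} (h : IsPUSO φ A B)
    (U : Finset ℕ) : IsPUSO (flipOut φ U) A B := by
  induction U using Finset.induction_on with
  | empty =>
    have : flipOut φ ∅ = φ := by
      funext V
      ext x
      simp [flipOut, Finset.mem_symmDiff]
    rwa [this]
  | insert i U hi ih =>
    have : flipOut φ (insert i U) = flipOut (flipOut φ U) {i} := by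
      funext V
      ext x
      simp only [flipOut, Finset.mem_symmDiff, Finset.mem_insert, Finset.mem_singleton]
      grind
    rw [this]
    exact ih.flip_singleton i

/-- Whether `φ` is a PUSO of `[∅, N]` depends only on the values of `φ` at vertices of the cube,
restricted to `N`. -/
lemma IsPUSO.congr {φ φ' : Finset ℕ → Finset ℕ} {N : Finset ℕ} (h : IsPUSO φ ∅ N)
    (e : ∀ V ⊆ N, ∀ x ∈ N, (x ∈ φ' V ↔ x ∈ φ V)) : IsPUSO φ' ∅ N := by
  obtain ⟨hAB, hn, hp⟩ := h
  have key : ∀ A' B' : Finset ℕ, B' ⊆ N →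
      (HasUniqueSink φ' A' B' ↔ HasUniqueSink φ A' B') := by
    intro A' B' h3
    have : ∀ V, IsSink φ' A' B' V ↔ IsSink φ A' B' V := by
      intro V
      simp only [isSink_iff]
      refine and_congr_right fun _ => and_congr_right fun hV => ?_
      refine forall_congr' fun x => forall_congr' fun hx => ?_
      rw [e V (hV.trans h3) x (h3 hx)]
    simp only [HasUniqueSink, this]
  refine ⟨hAB, fun h => hn ((key _ _ subset_rfl).1 h), ?_⟩
  intro A' B' h1 h2 h3 h4
  exact (key A' B' h3).2 (hp A' B' h1 h2 h3 h4)

/-- In a PUSO, two vertices on the same side of coordinate `i` that are both sinks of their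
`i`-facet coincide. -/
lemma IsPUSO.eq_of_facet {φ : Finset ℕ → Finset ℕ} {N : Finset ℕ} (h : IsPUSO φ ∅ N) {i : ℕ}
    (hi : i ∈ N) {V W : Finset ℕ} (hV : V ⊆ N) (hW : W ⊆ N)
    (hVs : ∀ x ∈ N, x ≠ i → x ∉ φ V) (hWs : ∀ x ∈ N, x ≠ i → x ∉ φ W)
    (hs : i ∈ V ↔ i ∈ W) : V = W := by
  by_cases hiV : i ∈ V
  · have hiW := hs.1 hiV
    refine (h.2.2 {i} N (by simp) (by simpa using hi) subset_rfl (by simp)).unique ?_ ?_ <;>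
    · rw [isSink_iff]
      grind
  · have hiW := fun h => hiV (hs.2 h)
    refine (h.2.2 ∅ (N.erase i) (by simp) (by simp) (Finset.erase_subset _ _)
      (by grind)).unique ?_ ?_ <;>
    · rw [isSink_iff]
      grind

/-- The antipode of a sink of a PUSO is a sink. -/
lemma IsPUSO.antipodal_sink {φ : Finset ℕ → Finset ℕ} {N : Finset ℕ} (h : IsPUSO φ ∅ N)
    {V : Finset ℕ} (hV : V ⊆ N) (hs : ∀ x ∈ N, x ∉ φ V) : ∀ x ∈ N, x ∉ φ (N \ V) := by
  have hVs : IsSink φ ∅ N V := by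
    rw [isSink_iff]
    grind
  obtain ⟨W, hW, hne⟩ : ∃ W, IsSink φ ∅ N W ∧ W ≠ V := by
    by_contra hc
    push Not at hc
    exact h.2.1 ⟨V, hVs, hc⟩
  rw [isSink_iff] at hW
  obtain ⟨-, hWN, hWs⟩ := hW
  have hopp : ∀ i ∈ N, ¬(i ∈ W ↔ i ∈ V) := fun i hi hc =>
    hne (h.eq_of_facet hi hWN hV (by grind) (by grind) hc)
  have : N \ V = W := by
    ext x
    grind
  rw [this]
  grind

/-- Antipodal vertices of a PUSO have the same outmap value. -/
lemma IsPUSO.antipodal {φ : Finset ℕ → Finset ℕ} {N : Finset ℕ} (h : IsPUSO φ ∅ N)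
    {V : Finset ℕ} (hV : V ⊆ N) : ∀ x ∈ N, (x ∈ φ (N \ V) ↔ x ∈ φ V) := by
  have := (h.flip (φ V)).antipodal_sink hV (by simp [flipOut])
  simp only [flipOut, Finset.mem_symmDiff] at this
  grind

/-- Of two outmap values differing in a single coordinate, a PUSO attains exactly one. -/
lemma IsPUSO.attained_symmDiff {φ : Finset ℕ → Finset ℕ} {N : Finset ℕ} (h : IsPUSO φ ∅ N)
    {U : Finset ℕ} {i : ℕ} (hi : i ∈ N) :
    (∃ V ⊆ N, ∀ x ∈ N, (x ∈ φ V ↔ x ∈ U ∆ {i})) ↔ ¬ ∃ V ⊆ N, ∀ x ∈ N, (x ∈ φ V ↔ x ∈ U) := by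
  constructor
  · rintro ⟨W, hW, hWi⟩ ⟨V, hV, hVU⟩
    have hanti := h.antipodal hV
    simp only [Finset.mem_symmDiff, Finset.mem_singleton] at hWi
    have hflip := h.flip U
    have a : V = W ∨ N \ V = W := by
      by_cases hs : i ∈ V ↔ i ∈ W
      · left
        refine hflip.eq_of_facet hi hV hW ?_ ?_ hs <;>
          simp only [flipOut, Finset.mem_symmDiff] <;> grind
      · right
        refine hflip.eq_of_facet hi Finset.sdiff_subset hW ?_ ?_ (by grind) <;>
          simp only [flipOut, Finset.mem_symmDiff] <;> grind
    have := hWi i hi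
    have := hVU i hi
    have := hanti i hi
    grind
  · intro hno
    -- The lower `i`-facet has a sink after flipping `U`; its value is `U` or `U ∆ {i}`.
    obtain ⟨s, hs, -⟩ := (h.flip U).2.2 ∅ (N.erase i) (by simp) (by simp)
      (Finset.erase_subset _ _) (by grind)
    rw [isSink_iff] at hs
    obtain ⟨-, hsN, hs⟩ := hs
    simp only [flipOut, Finset.mem_symmDiff] at hs
    have hsN' : s ⊆ N := hsN.trans (Finset.erase_subset _ _)
    refine ⟨s, hsN', ?_⟩
    have hsi : ¬(i ∈ φ s ↔ i ∈ U) := fun hc => hno ⟨s, hsN', by grind⟩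
    simp only [Finset.mem_symmDiff, Finset.mem_singleton]
    grind

/-- All outmap values of a PUSO, restricted to the coordinates of the cube, have the same
parity. -/
lemma IsPUSO.parity {φ : Finset ℕ → Finset ℕ} {N : Finset ℕ} (h : IsPUSO φ ∅ N) :
    ∃ p, ∀ V ⊆ N, (φ V ∩ N).card % 2 = p % 2 := by
  have key : ∃ p, ∀ D ⊆ N,
      ((∃ V ⊆ N, ∀ x ∈ N, (x ∈ φ V ↔ x ∈ D)) ↔ D.card % 2 = p % 2) := by
    refine ⟨if ∃ V ⊆ N, ∀ x ∈ N, (x ∈ φ V ↔ x ∈ (∅ : Finset ℕ)) then 0 else 1, ?_⟩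
    intro D
    induction D using Finset.induction_on with
    | empty =>
      intro _
      split_ifs with hc
      · simpa using hc
      · simpa using hc
    | insert i D hi ih =>
      intro hD
      have e : insert i D = D ∆ {i} := by
        ext x
        simp only [Finset.mem_symmDiff, Finset.mem_insert, Finset.mem_singleton]
        grind
      have hc := Finset.card_insert_of_notMem hi
      rw [hc, e, h.attained_symmDiff (hD (Finset.mem_insert_self _ _)),
        ih ((Finset.subset_insert _ _).trans hD)]
      omega
  obtain ⟨p, hp⟩ := key
  exact ⟨p, fun V hV => (hp _ Finset.inter_subset_right).1 ⟨V, hV, by grind⟩⟩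

lemma mem_phiExtAux (n i : ℕ) (ψ : Finset ℕ → Finset ℕ) (V : Finset ℕ) (x : ℕ) :
    x ∈ phiExtAux n i ψ V ↔ x ∈ ψ V ∨ (x = n ∧ (ψ V).card % 2 ≠ i % 2) := by
  unfold phiExtAux
  split_ifs with h <;> simp [h, or_comm]

/-- Changing the parity of `i` flips coordinate `n` of `φ_i`. -/
lemma mem_phiExt_parity {n i j : ℕ} {ψ : Finset ℕ → Finset ℕ}
    (hψr : ∀ V : Finset ℕ, V ⊆ Finset.Icc 1 (n - 1) → ψ V ⊆ Finset.Icc 1 (n - 1))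
    (hn : 2 ≤ n) (hij : i % 2 ≠ j % 2) {V : Finset ℕ} (hV : V ⊆ Finset.Icc 1 n) (x : ℕ) :
    x ∈ phiExt n j ψ V ↔ x ∈ flipOut (phiExt n i ψ) {n} V := by
  have aux : ∀ W ⊆ Finset.Icc 1 (n - 1),
      (x ∈ phiExtAux n j ψ W ↔ x ∈ phiExtAux n i ψ W ∆ {n}) := by
    intro W hW
    have hnW : n ∉ ψ W := fun hc => by
      have := Finset.mem_Icc.1 (hψr W hW hc)
      omega
    simp only [Finset.mem_symmDiff, Finset.mem_singleton, mem_phiExtAux]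
    by_cases hx : x = n
    · subst hx
      have : (ψ W).card % 2 ≠ i % 2 ↔ ¬ (ψ W).card % 2 ≠ j % 2 := by omega
      grind
    · simp [hx]
  unfold flipOut phiExt
  split_ifs with h <;> apply aux <;> intro y hy
  · simp only [Finset.mem_sdiff, Finset.mem_Icc] at hy ⊢
    have : y ≠ n := by grind
    omega
  · have := Finset.mem_Icc.1 (hV hy)
    have : y ≠ n := by grind
    rw [Finset.mem_Icc]
    omega

/-- A PUSO of the `n`-cube extending `ψ` agrees on the cube with `φ_p` for some parity `p`. -/
lemma exists_phiExt_puso {n : ℕ} (hn : 2 ≤ n) {ψ φ : Finset ℕ → Finset ℕ}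
    (h : IsPUSO φ ∅ (Finset.Icc 1 n))
    (hφ : ∀ V : Finset ℕ, V ⊆ Finset.Icc 1 (n - 1) → φ V ∩ Finset.Icc 1 (n - 1) = ψ V) :
    ∃ p, IsPUSO (phiExt n p ψ) ∅ (Finset.Icc 1 n) := by
  obtain ⟨p, hp⟩ := h.parity
  refine ⟨p, h.congr ?_⟩
  have hI : Finset.Icc 1 n = insert n (Finset.Icc 1 (n - 1)) := by
    ext y
    simp only [Finset.mem_Icc, Finset.mem_insert]
    omega
  have hnI : n ∉ Finset.Icc 1 (n - 1) := by
    simp only [Finset.mem_Icc]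
    omega
  have aux : ∀ W ⊆ Finset.Icc 1 (n - 1), ∀ x ∈ Finset.Icc 1 n,
      (x ∈ phiExtAux n p ψ W ↔ x ∈ φ W) := by
    intro W hW x hx
    have hpW := hp W (hW.trans (hI ▸ Finset.subset_insert _ _))
    rw [mem_phiExtAux, ← hφ W hW]
    by_cases hxn : x = n
    · subst hxn
      by_cases hm : x ∈ φ W
      · rw [hI, Finset.inter_insert_of_mem hm, Finset.card_insert_of_notMem (by grind)] at hpW
        have : (φ W ∩ Finset.Icc 1 (x - 1)).card % 2 ≠ p % 2 := by omega
        simp [this, hm]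
      · rw [hI, Finset.inter_insert_of_notMem hm] at hpW
        simp [hpW, hm]
    · grind
  intro V hV x hx
  unfold phiExt
  split_ifs with hnV
  · rw [← h.antipodal hV x hx]
    exact aux _ (by grind) x hx
  · exact aux _ (by grind) x hx

/-- For a USO `ψ` of the facet `[∅,{1,…,n-1}]`, being a border USO is
equivalent to the canonical extension `φ_0` being a PUSO of the full face of
the standard `n`-cube, and also equivalent to `φ_1` being such a PUSO. -/
theorem border_iff_extensions_puso (n : ℕ) (hn : 2 ≤ n)
    (ψ : Finset ℕ → Finset ℕ)
    (hψr : ∀ V : Finset ℕ, V ⊆ Finset.Icc 1 (n - 1) → ψ V ⊆ Finset.Icc 1 (n - 1))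
    (hψ : IsUSO ψ ∅ (Finset.Icc 1 (n - 1))) :
    (IsBorderUSO (n - 1) ψ ↔ IsPUSO (phiExt n 0 ψ) ∅ (Finset.Icc 1 n)) ∧
    (IsBorderUSO (n - 1) ψ ↔ IsPUSO (phiExt n 1 ψ) ∅ (Finset.Icc 1 n)) := by
  have main : ∀ j, IsBorderUSO (n - 1) ψ ↔ IsPUSO (phiExt n j ψ) ∅ (Finset.Icc 1 n) := by
    intro j
    have hn1 : n - 1 + 1 = n := by omega
    constructor
    · rintro ⟨-, φ, hP, hφ⟩
      rw [hn1] at hP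
      obtain ⟨p, hp⟩ := exists_phiExt_puso hn hP hφ
      by_cases hpj : p % 2 = j % 2
      · have : phiExt n j ψ = phiExt n p ψ := by
          funext V
          simp only [phiExt, phiExtAux, hpj]
        rwa [this]
      · exact (hp.flip {n}).congr fun V hV x _ => mem_phiExt_parity hψr hn hpj hV x
    · intro h
      refine ⟨hψ, phiExt n j ψ, by rwa [hn1], fun V hV => ?_⟩
      have hnI : n ∉ Finset.Icc 1 (n - 1) := by
        simp only [Finset.mem_Icc]
        omega
      have hr := hψr V hV
      rw [phiExt, if_neg (fun hc => hnI (hV hc))]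
      ext x
      rw [Finset.mem_inter, mem_phiExtAux]
      grind
  exact ⟨main 0, main 1⟩
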